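/- arXiv:1705.08316 — 2 statements merged into one kernel-verified Lean document; each statement's English description precedes it below -/
import Mathlib

section
/- Let G be a simple graph on n ≥ 4 vertices such that both G and its complement Ḡ are connected and both have edge-connectivity 1 (i.e., each has a cut-edge). Then 4 ≤ cfc(G) + cfc(Ḡ) ≤ n and 4 ≤ cfc(G) · cfc(Ḡ) ≤ 2(n − 2). Moreover, cfc(G) + cfc(Ḡ) = n or cfc(G) · cfc(Ḡ) = 2(n − 2) holds if and only if one of G and Ḡ is a tree with maximum degree n − 2. -/
open SimpleGraph

/-- An edge-coloring `c` makes `G` conflict-free connected: every pair of distinct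
vertices is joined by a path on which some color appears on exactly one edge. -/
def IsCFCColoring {V : Type*} (G : SimpleGraph V) (c : Sym2 V → ℕ) : Prop :=
  ∀ u v : V, u ≠ v → ∃ p : G.Path u v, ∃ e ∈ (p.1).edges,
    ∀ e' ∈ (p.1).edges, c e' = c e → e' = e

/-- The conflict-free connection number of `G`: the least `k` such that some
edge-coloring of `G` with colors from `{0, …, k-1}` makes `G` conflict-free connected. -/
noncomputable def cfcNum {V : Type*} (G : SimpleGraph V) : ℕ :=
  sInf {k | ∃ c : Sym2 V → ℕ, (∀ e ∈ G.edgeSet, c e < k) ∧ IsCFCColoring G c}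

/-- The vertices `u` and `v` are joined by a conflict-free path. -/
def ConflictFreeJoined {V : Type*} (G : SimpleGraph V) (c : Sym2 V → ℕ) (u v : V) : Prop :=
  ∃ p : G.Path u v, ∃ e ∈ (p.1).edges, ∀ e' ∈ (p.1).edges, c e' = c e → e' = e

namespace ConflictFreeJoined

variable {V : Type*} {G : SimpleGraph V} {c : Sym2 V → ℕ} {u v w x y : V}

theorem symm (h : ConflictFreeJoined G c u v) : ConflictFreeJoined G c v u := by
  obtain ⟨p, e, he, h⟩ := h
  exact ⟨p.reverse, e, by simpa using he, by simpa using h⟩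

theorem of_adj (h : G.Adj u v) : ConflictFreeJoined G c u v :=
  ⟨Path.singleton h, s(u, v), by simp [Path.singleton], by simp [Path.singleton]⟩

theorem of_two (h₁ : G.Adj u v) (h₂ : G.Adj v w) (huw : u ≠ w)
    (hc : c s(u, v) ≠ c s(v, w)) : ConflictFreeJoined G c u w := by
  refine ⟨⟨.cons h₁ (.cons h₂ .nil), ?_⟩, s(u, v), by simp, ?_⟩
  · simp [h₁.ne, h₂.ne, huw]
  · simp only [Walk.edges_cons, Walk.edges_nil, List.mem_cons, List.not_mem_nil, or_false]
    grind

theorem of_three (h₁ : G.Adj u v) (h₂ : G.Adj v w) (h₃ : G.Adj w x) (huw : u ≠ w) (hux : u ≠ x)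
    (hvx : v ≠ x) {e : Sym2 V} (he : e ∈ [s(u, v), s(v, w), s(w, x)])
    (hc : ∀ e' ∈ [s(u, v), s(v, w), s(w, x)], c e' = c e → e' = e) :
    ConflictFreeJoined G c u x := by
  refine ⟨⟨.cons h₁ (.cons h₂ (.cons h₃ .nil)), ?_⟩, e, by simpa using he, by simpa using hc⟩
  simp [h₁.ne, h₂.ne, h₃.ne, huw, hux, hvx]

theorem of_four (h₁ : G.Adj u v) (h₂ : G.Adj v w) (h₃ : G.Adj w x) (h₄ : G.Adj x y)
    (huw : u ≠ w) (hux : u ≠ x) (huy : u ≠ y) (hvx : v ≠ x) (hvy : v ≠ y) (hwy : w ≠ y)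
    {e : Sym2 V} (he : e ∈ [s(u, v), s(v, w), s(w, x), s(x, y)])
    (hc : ∀ e' ∈ [s(u, v), s(v, w), s(w, x), s(x, y)], c e' = c e → e' = e) :
    ConflictFreeJoined G c u y := by
  refine ⟨⟨.cons h₁ (.cons h₂ (.cons h₃ (.cons h₄ .nil))), ?_⟩, e, by simpa using he,
    by simpa using hc⟩
  simp [h₁.ne, h₂.ne, h₃.ne, h₄.ne, huw, hux, huy, hvx, hvy, hwy]

end ConflictFreeJoined

section Bridges

variable {V : Type*} {G : SimpleGraph V}

/-- In a graph without leaves, deleting an edge `xy` leaves at least three vertices in the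
component of `x`. -/
theorem exists_reachable_deleteEdges {x y : V}
    (hl : ∀ u v : V, G.Adj u v → ∃ w, w ≠ v ∧ G.Adj u w) (hxy : G.Adj x y) (u : V) :
    ∃ w, w ≠ x ∧ w ≠ u ∧ (G.deleteEdges {s(x, y)}).Reachable x w := by
  obtain ⟨x₁, h₁, hx₁⟩ := hl x y hxy
  obtain ⟨x₂, h₂, hx₂⟩ := hl x₁ x hx₁.symm
  have a₁ : (G.deleteEdges {s(x, y)}).Adj x x₁ := by
    rw [deleteEdges_adj]; refine ⟨hx₁, ?_⟩
    have := hxy.ne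
    simp; grind
  have a₂ : (G.deleteEdges {s(x, y)}).Adj x₁ x₂ := by
    rw [deleteEdges_adj]; refine ⟨hx₂, ?_⟩
    have := hx₁.ne
    simp; grind
  by_cases hu : x₁ = u
  · exact ⟨x₂, h₂, hu ▸ hx₂.ne', a₁.reachable.trans a₂.reachable⟩
  · exact ⟨x₁, hx₁.ne', hu, a₁.reachable⟩

/-- If both a connected graph and its connected complement have a bridge, then the graph has a
leaf. -/
theorem exists_leaf_of_isBridge (hG : G.Connected) (hGc : Gᶜ.Connected)
    (hb : ∃ e : Sym2 V, G.IsBridge e) (hbc : ∃ e : Sym2 V, Gᶜ.IsBridge e) :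
    ∃ x y : V, ∀ z, G.Adj x z ↔ z = y := by
  by_contra hno
  have hl : ∀ u v : V, G.Adj u v → ∃ w, w ≠ v ∧ G.Adj u w := by
    intro u v huv
    by_contra hw
    push Not at hw
    refine hno ⟨u, v, fun z => ⟨fun hz => ?_, fun hz => hz ▸ huv⟩⟩
    by_contra hzv
    exact hw z hzv hz
  obtain ⟨⟨x, y⟩, hb⟩ := hb
  obtain ⟨⟨p, q⟩, hbc⟩ := hbc
  have hxy : G.Adj x y := hb.reachable_iff_adj.1 (hG.preconnected x y)
  have hpq : Gᶜ.Adj p q := hbc.reachable_iff_adj.1 (hGc.preconnected p q)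
  change ¬ (G.deleteEdges {s(x, y)}).Reachable x y at hb
  change ¬ (Gᶜ.deleteEdges {s(p, q)}).Reachable p q at hbc
  set H := G.deleteEdges {s(x, y)} with hH
  have hside : ∀ v, H.Reachable x v ∨ H.Reachable y v := by
    intro v
    by_contra hv
    push Not at hv
    obtain ⟨W⟩ := hG.preconnected x v
    obtain ⟨d, -, h₁, h₂⟩ := W.exists_boundary_dart {v | H.Reachable x v ∨ H.Reachable y v}
      (Or.inl .rfl) (by simpa using hv)
    apply h₂
    by_cases hd : s(d.fst, d.snd) = s(x, y)
    · rcases Sym2.eq_iff.1 hd with ⟨-, h⟩ | ⟨-, h⟩ <;> simp [h]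
    · have : H.Adj d.fst d.snd := by rw [hH, deleteEdges_adj]; exact ⟨d.adj, hd⟩
      exact h₁.imp (·.trans this.reachable) (·.trans this.reachable)
  have hX := exists_reachable_deleteEdges hl hxy
  have hY := exists_reachable_deleteEdges hl hxy.symm
  rw [Sym2.eq_swap (a := y), ← hH] at hY
  have hdisj : ∀ v, H.Reachable x v → ¬ H.Reachable y v := fun v h h' => hb (h.trans h'.symm)
  have hcross : ∀ u v, H.Reachable x u → H.Reachable y v → (u ≠ x ∨ v ≠ y) →
      s(u, v) ≠ s(p, q) → (Gᶜ.deleteEdges {s(p, q)}).Adj u v := by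
    intro u v hu hv huv hne
    rw [deleteEdges_adj, compl_adj]
    refine ⟨⟨fun h => hdisj u hu (h ▸ hv), fun h => ?_⟩, hne⟩
    by_cases hd : s(u, v) = s(x, y)
    · rcases Sym2.eq_iff.1 hd with ⟨h₁, h₂⟩ | ⟨h₁, h₂⟩
      · exact huv.elim (· h₁) (· h₂)
      · exact hdisj u hu (h₁ ▸ .rfl)
    · have : H.Adj u v := by rw [hH, deleteEdges_adj]; exact ⟨h, hd⟩
      exact hdisj v (hu.trans this.reachable) hv
  have key : ∀ u v, H.Reachable x u → H.Reachable y v → s(p, q) = s(u, v) →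
      (Gᶜ.deleteEdges {s(p, q)}).Reachable u v := by
    intro u v hu hv he
    obtain ⟨u', hu'x, hu'u, hu'⟩ := hX u
    obtain ⟨v', hv'y, hv'v, hv'⟩ := hY v
    have ne : ∀ a b, H.Reachable x a → H.Reachable y b → (a ≠ u ∨ b ≠ v) → s(a, b) ≠ s(p, q) := by
      intro a b ha hb' hab h
      rw [he] at h
      rcases Sym2.eq_iff.1 h with ⟨h₁, h₂⟩ | ⟨h₁, h₂⟩
      · exact hab.elim (· h₁) (· h₂)
      · exact hdisj a ha (h₁ ▸ hv)
    exact (hcross u v' hu hv' (.inr hv'y) (ne _ _ hu hv' (.inr hv'v))).reachable.trans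
      ((hcross u' v' hu' hv' (.inr hv'y) (ne _ _ hu' hv' (.inr hv'v))).symm.reachable.trans
      (hcross u' v hu' hv (.inl hu'x) (ne _ _ hu' hv (.inl hu'u))).reachable)
  rcases hside p with hp | hp <;> rcases hside q with hq | hq
  · obtain ⟨z, hzy, -, hz⟩ := hY y
    refine hbc ((hcross p z hp hz (.inr hzy) ?_).reachable.trans
      (hcross q z hq hz (.inr hzy) ?_).symm.reachable)
    · intro h; have : z = q := by have := hpq.ne; rcases Sym2.eq_iff.1 h with h | h <;> simp_all
      exact hdisj q hq (this ▸ hz)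
    · intro h; have : z = p := by have := hpq.ne; rcases Sym2.eq_iff.1 h with h | h <;> simp_all
      exact hdisj p hp (this ▸ hz)
  · exact hbc (key p q hp hq rfl)
  · exact hbc (key q p hq hp Sym2.eq_swap).symm
  · obtain ⟨z, hzx, -, hz⟩ := hX x
    refine hbc ((hcross z p hz hp (.inl hzx) ?_).symm.reachable.trans
      (hcross z q hz hq (.inl hzx) ?_).reachable)
    · intro h; have : z = q := by have := hpq.ne; rcases Sym2.eq_iff.1 h with h | h <;> simp_all
      exact hdisj q (this ▸ hz) hq
    · intro h; have : z = p := by have := hpq.ne; rcases Sym2.eq_iff.1 h with h | h <;> simp_all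
      exact hdisj p (this ▸ hz) hp

end Bridges

section StarColoring

variable {V : Type*} {a : V}

theorem exists_injOn_lt {α : Type*} (S : Finset α) {k : ℕ} (hk : 2 ≤ k) (hS : S.card ≤ k)
    (u : α) : ∃ g : α → ℕ, (∀ v, g v < k) ∧ Set.InjOn g S ∧ g u = 1 := by
  classical
  obtain ⟨g, hg, hinj⟩ : ∃ g : α → ℕ, (∀ v, g v < k) ∧ Set.InjOn g S := by
    refine ⟨fun s => if h : s ∈ S then (S.equivFin ⟨s, h⟩).val else 0, fun v => ?_, ?_⟩
    · dsimp only
      split_ifs with h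
      · exact (Fin.isLt _).trans_le hS
      · lia
    · intro s hs t ht hst
      rw [Finset.mem_coe] at hs ht
      simpa [hs, ht, Fin.val_inj] using hst
  refine ⟨fun v => Equiv.swap 1 (g u) (g v), fun v => ?_, ?_, by simp⟩
  · have h₁ := hg u
    have h₂ := hg v
    dsimp only
    rw [Equiv.swap_apply_def]
    split_ifs <;> lia
  · exact fun s hs t ht hst => hinj hs ht ((Equiv.swap 1 (g u)).injective hst)

/-- The coloring giving the edge `av` the color `f v` and the edges avoiding `a` the color `0`. -/
noncomputable def starColoring (a : V) (f : V → ℕ) : Sym2 V → ℕ :=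
  open Classical in
  Sym2.lift ⟨fun u v => if u = a then f v else if v = a then f u else 0, by
    intro u v
    dsimp only
    split_ifs <;> simp_all⟩

theorem starColoring_left (f : V → ℕ) (v : V) : starColoring a f s(a, v) = f v := by
  simp [starColoring]

theorem starColoring_right (f : V → ℕ) (v : V) : starColoring a f s(v, a) = f v := by
  rw [Sym2.eq_swap, starColoring_left]

theorem starColoring_of_ne (f : V → ℕ) {u v : V} (hu : u ≠ a) (hv : v ≠ a) :
    starColoring a f s(u, v) = 0 := by
  simp [starColoring, hu, hv]

theorem starColoring_lt {k : ℕ} (hk : 0 < k) {f : V → ℕ} (hf : ∀ v, f v < k) (e : Sym2 V) :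
    starColoring a f e < k := by
  induction e with
  | h u v =>
    simp only [starColoring, Sym2.lift_mk]
    split_ifs <;> simp [hf, hk]

end StarColoring

section UpperBound

variable {V : Type*} [Fintype V] {G : SimpleGraph V} {a b : V}

open Classical in
/-- When `a` is adjacent to all vertices but `b`, the vertices `s` such that `as` is a bridge:
those whose neighbours are `a` and possibly `b`, provided in the latter case that `s` is the only
neighbour of `b`. -/
noncomputable def bridgeNeighbors (G : SimpleGraph V) (a b : V) : Finset V :=
  {s | s ≠ a ∧ s ≠ b ∧ ∀ z, G.Adj s z → z = a ∨ (z = b ∧ ∀ t, G.Adj b t → t = s)}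

theorem mem_bridgeNeighbors {s : V} : s ∈ bridgeNeighbors G a b ↔
    s ≠ a ∧ s ≠ b ∧ ∀ z, G.Adj s z → z = a ∨ (z = b ∧ ∀ t, G.Adj b t → t = s) := by
  simp [bridgeNeighbors]

theorem isCFCColoring_starColoring (hab : ∀ z, Gᶜ.Adj a z ↔ z = b) {f : V → ℕ}
    (hinj : Set.InjOn f (bridgeNeighbors G a b)) {w : V} (hbw : G.Adj b w)
    (hf : ∀ v ∉ bridgeNeighbors G a b, v ≠ w → f v = 1)
    (hw : ((∀ t, G.Adj b t → t = w) ∧ f w = 1) ∨ ((∃ c, G.Adj b c ∧ c ≠ w) ∧ f w = 0)) :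
    IsCFCColoring G (starColoring a f) := by
  have hne : a ≠ b := ((hab b).2 rfl).ne
  have hnab : ¬ G.Adj a b := ((hab b).2 rfl).2
  have ha : ∀ z, z ≠ a → z ≠ b → G.Adj a z := by
    intro z hza hzb
    by_contra h
    exact hzb ((hab z).1 ((compl_adj ..).2 ⟨hza.symm, h⟩))
  have hbN : ∀ t, G.Adj b t → t ≠ a ∧ t ≠ b := fun t ht =>
    ⟨fun h => hnab (h ▸ ht.symm), ht.ne'⟩
  have hwS : ∀ s ∈ bridgeNeighbors G a b, G.Adj b s → ∀ t, G.Adj b t → t = s := by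
    intro s hs hbs
    rcases (mem_bridgeNeighbors.1 hs).2.2 b hbs.symm with h | h
    · exact absurd h hne.symm
    · exact h.2
  -- `b` and `a`, and `b` and the neighbours of `a`
  have hb : ∀ v, v ≠ b → ConflictFreeJoined G (starColoring a f) b v := by
    intro v hvb
    by_cases hbv : G.Adj b v
    · exact .of_adj hbv
    have hwa := (hbN w hbw).1
    by_cases hva : v = a
    · subst hva
      have key : ∀ c, G.Adj b c → f c = 1 → ConflictFreeJoined G (starColoring v f) b v := by
        intro c hc hfc
        refine .of_two hc (ha c (hbN c hc).1 (hbN c hc).2).symm hne.symm ?_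
        rw [starColoring_right, starColoring_of_ne f hne.symm (hbN c hc).1, hfc]
        simp
      rcases hw with ⟨-, hw⟩ | ⟨⟨c, hc, hcw⟩, hw⟩
      · exact key w hbw hw
      · refine key c hc (hf c (fun hcS => hcw ?_) hcw)
        exact (hwS c hcS hc w hbw).symm
    have key : ∀ c, G.Adj b c → (f c ≠ 0 ∨ f v ≠ 0) → ConflictFreeJoined G (starColoring a f) b v := by
      intro c hc h
      have hca := (hbN c hc).1
      have hcv : c ≠ v := fun h => hbv (h ▸ hc)
      have e₁ := starColoring_of_ne f hne.symm hca
      have e₂ := starColoring_right (a := a) f c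
      have e₃ := starColoring_left (a := a) f v
      have m := fun e => ConflictFreeJoined.of_three (c := starColoring a f) (e := e) hc
        (ha c hca (hbN c hc).2).symm (ha v hva hvb) hne.symm (Ne.symm hvb) hcv
      by_cases h₁ : f c = 0
      · refine m s(a, v) (by simp) ?_
        have h₂ : f v ≠ 0 := by lia
        simp [e₁, e₂, e₃, h₁, Ne.symm h₂]
      by_cases h₂ : f v = f c
      · refine m s(b, c) (by simp) ?_
        simp [e₁, e₂, e₃, h₁, h₂]
      · refine m s(c, a) (by simp) ?_
        simp [e₁, e₂, e₃, h₂, Ne.symm h₁]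
    rcases hw with ⟨-, hw⟩ | ⟨⟨c, hc, hcw⟩, hw⟩
    · refine key w hbw ?_
      lia
    · by_cases hfv : f v = 0
      · have : f c = 1 := hf c (fun hcS => hcw (hwS c hcS hc w hbw).symm) hcw
        exact key c hc (by lia)
      · exact key w hbw (by lia)
  -- two nonadjacent neighbours of `a`
  have main : ∀ u v, u ≠ a → u ≠ b → v ≠ a → v ≠ b → u ≠ v → ¬ G.Adj u v → f u = f v →
      u ∉ bridgeNeighbors G a b → ConflictFreeJoined G (starColoring a f) u v := by
    intro u v hua hub hva hvb huv huvadj hfuv huS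
    have hau := ha u hua hub
    have hav := ha v hva hvb
    have hwa := (hbN w hbw).1
    have hwb := (hbN w hbw).2
    have haw := ha w hwa hwb
    by_cases hu0 : f u = 0
    · have huw : u = w := by
        by_contra h
        have := hf u huS h
        lia
      subst huw
      rcases hw with hw | ⟨⟨c, hc, hcw⟩, hw⟩
      · lia
      have hvS : v ∈ bridgeNeighbors G a b := by
        by_contra h
        have := hf v h huv.symm
        lia
      have hcS : c ∉ bridgeNeighbors G a b := fun hcS => hcw (hwS c hcS hc u hbw).symm
      have hca := (hbN c hc).1
      have hcv : c ≠ v := fun h => hcS (h ▸ hvS)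
      refine .of_four (e := s(c, a)) hbw.symm hc (ha c hca (hbN c hc).2).symm hav hcw.symm hua huv
        hne.symm hvb.symm hcv (by simp) ?_
      simp [starColoring_of_ne f hua hne.symm, starColoring_of_ne f hne.symm hca,
        starColoring_right, starColoring_left, ← hfuv, hu0, hf c hcS hcw]
    have hu1 : f u = 1 := by
      by_cases h : u = w
      · subst h; lia
      · exact hf u huS h
    rw [mem_bridgeNeighbors] at huS
    push Not at huS
    obtain ⟨z, huz, hza, hz⟩ := huS hua hub
    have hvz : z ≠ v := fun h => huvadj (h ▸ huz)
    by_cases hzb : z = b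
    · subst hzb
      obtain ⟨t, ht, htu⟩ := hz rfl
      rcases hw with ⟨h, -⟩ | ⟨-, hw⟩
      · exact absurd ((h t ht).trans (h u huz.symm).symm) htu
      have huw : u ≠ w := by rintro rfl; lia
      have hvw : w ≠ v := by rintro rfl; lia
      refine .of_four (e := s(a, v)) huz hbw haw.symm hav huw hua huv hza hvz hvw (by simp) ?_
      simp [starColoring_of_ne f hua hza, starColoring_of_ne f hza hwa,
        starColoring_right, starColoring_left, ← hfuv, hu1, hw]
    · have m := fun e => ConflictFreeJoined.of_three (c := starColoring a f) (e := e) huz (ha z hza hzb).symm hav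
        hua huv hvz
      by_cases hz0 : f z = 0
      · refine m s(a, v) (by simp) ?_
        simp [starColoring_of_ne f hua hza, starColoring_right, starColoring_left, ← hfuv, hu1,
          hz0]
      · refine m s(u, z) (by simp) ?_
        simp [starColoring_of_ne f hua hza, starColoring_right, starColoring_left, ← hfuv, hu1,
          hz0]
  intro u v huv
  change ConflictFreeJoined G (starColoring a f) u v
  by_cases hub : u = b
  · exact hub ▸ hb v (hub ▸ huv.symm)
  by_cases hvb : v = b
  · exact hvb ▸ (hb u hub).symm
  by_cases hadj : G.Adj u v
  · exact .of_adj hadj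
  by_cases hua : u = a
  · exact absurd (hua ▸ ha v (hua ▸ huv.symm) hvb) hadj
  by_cases hva : v = a
  · exact absurd (hva ▸ (ha u hua hub).symm) hadj
  by_cases hfuv : f u = f v
  · by_cases huS : u ∈ bridgeNeighbors G a b
    · refine (main v u hva hvb hua hub huv.symm (fun h => hadj h.symm) hfuv.symm ?_).symm
      exact fun hvS => huv (hinj huS hvS hfuv)
    · exact main u v hua hub hva hvb huv hadj hfuv huS
  · refine .of_two (ha u hua hub).symm (ha v hva hvb) huv ?_
    rwa [starColoring_right, starColoring_left]

theorem exists_isCFCColoring_lt (hG : G.Connected) (hab : ∀ z, Gᶜ.Adj a z ↔ z = b) {k : ℕ}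
    (hk : 2 ≤ k) (hS : (bridgeNeighbors G a b).card ≤ k) :
    ∃ c : Sym2 V → ℕ, (∀ e ∈ G.edgeSet, c e < k) ∧ IsCFCColoring G c := by
  classical
  have : Nontrivial V := ⟨a, b, ((hab b).2 rfl).ne⟩
  obtain ⟨w, hbw⟩ := hG.preconnected.exists_adj_of_nontrivial b
  obtain ⟨g, hg, hinj, hgw⟩ := exists_injOn_lt _ hk hS w
  let f : V → ℕ := fun v => if v ∈ bridgeNeighbors G a b then g v else
    if v = w ∧ ∃ c, G.Adj b c ∧ c ≠ w then 0 else 1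
  refine ⟨starColoring a f, fun e _ => starColoring_lt (by lia) (fun v => ?_) e,
    isCFCColoring_starColoring hab (w := w) ?_ hbw ?_ ?_⟩
  · have := hg v
    dsimp only [f]
    split_ifs <;> lia
  · exact hinj.congr fun s hs => (if_pos hs).symm
  · intro v hv hvw
    simp [f, hv, hvw]
  · by_cases hD : ∃ c, G.Adj b c ∧ c ≠ w
    · refine .inr ⟨hD, ?_⟩
      obtain ⟨c, hc, hcw⟩ := hD
      have hwS : w ∉ bridgeNeighbors G a b := by
        intro hwS
        rcases (mem_bridgeNeighbors.1 hwS).2.2 b hbw.symm with h | h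
        · exact ((hab b).2 rfl).ne h.symm
        · exact hcw (h.2 c hc)
      simpa [f, hwS] using ⟨c, hc, hcw⟩
    · refine .inl ⟨by simpa using hD, ?_⟩
      simp [f, hgw, hD]

theorem cfcNum_le (hG : G.Connected) (hab : ∀ z, Gᶜ.Adj a z ↔ z = b) :
    cfcNum G ≤ max 2 (bridgeNeighbors G a b).card :=
  Nat.sInf_le (exists_isCFCColoring_lt hG hab (le_max_left ..) (le_max_right ..))

theorem exists_isCFCColoring_lt_cfcNum (hG : G.Connected) (hab : ∀ z, Gᶜ.Adj a z ↔ z = b) :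
    ∃ c : Sym2 V → ℕ, (∀ e ∈ G.edgeSet, c e < cfcNum G) ∧ IsCFCColoring G c :=
  Nat.sInf_mem (s := {k | ∃ c : Sym2 V → ℕ, (∀ e ∈ G.edgeSet, c e < k) ∧ IsCFCColoring G c})
    ⟨_, exists_isCFCColoring_lt hG hab (le_max_left ..) (le_max_right ..)⟩

end UpperBound

section Extremal

variable {V : Type*} [Fintype V] {G : SimpleGraph V} {a b : V}

theorem two_le_cfcNum (hG : G.Connected) (hab : ∀ z, Gᶜ.Adj a z ↔ z = b) : 2 ≤ cfcNum G := by
  obtain ⟨c, hc, hcf⟩ := exists_isCFCColoring_lt_cfcNum hG hab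
  by_contra! hlt
  have hne := ((hab b).2 rfl).ne
  obtain ⟨⟨p, hp⟩, e, he, hu⟩ := hcf a b hne
  have heq : ∀ e' ∈ p.edges, e' = e := by
    intro e' he'
    have h₁ := hc e (p.edges_subset_edgeSet he)
    have h₂ := hc e' (p.edges_subset_edgeSet he')
    exact hu e' he' (by lia)
  match p, hp, heq with
  | .nil, _, _ => exact hne rfl
  | .cons h .nil, _, _ => exact ((hab b).2 rfl).2 h
  | .cons (v := x) h (.cons (v := y) h' q), hp, heq =>
    have : s(a, x) = s(x, y) := (heq _ (by simp)).trans (heq _ (by simp)).symm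
    have hay : a = y := by
      rcases Sym2.eq_iff.1 this with ⟨h₁, -⟩ | ⟨h₁, -⟩
      · exact absurd h₁ h.ne
      · exact h₁
    subst hay
    simp [Walk.cons_isPath_iff] at hp

theorem card_bridgeNeighbors_le (hne : a ≠ b) :
    (bridgeNeighbors G a b).card ≤ Fintype.card V - 2 := by
  classical
  calc (bridgeNeighbors G a b).card ≤ (Finset.univ \ {a, b}).card := by
        refine Finset.card_le_card fun s hs => ?_
        have := mem_bridgeNeighbors.1 hs
        simp [this.1, this.2.1]
    _ = Fintype.card V - 2 := by
        rw [Finset.card_sdiff_of_subset (Finset.subset_univ _), Finset.card_pair hne,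
          Finset.card_univ]

theorem isTree_of_card_bridgeNeighbors (hG : G.Connected) (hab : ∀ z, Gᶜ.Adj a z ↔ z = b)
    (hS : (bridgeNeighbors G a b).card = Fintype.card V - 2) : G.IsTree := by
  classical
  have hne := ((hab b).2 rfl).ne
  have hnab : ¬ G.Adj a b := ((hab b).2 rfl).2
  have hmem : ∀ s, s ≠ a → s ≠ b → s ∈ bridgeNeighbors G a b := by
    have hsub : bridgeNeighbors G a b ⊆ Finset.univ \ {a, b} := by
      intro s hs
      have := mem_bridgeNeighbors.1 hs
      simp [this.1, this.2.1]
    have := Finset.eq_of_subset_of_card_le hsub (by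
      rw [hS, Finset.card_sdiff_of_subset (Finset.subset_univ _), Finset.card_pair hne,
        Finset.card_univ])
    intro s h₁ h₂
    simp [this, h₁, h₂]
  have : Nontrivial V := ⟨a, b, hne⟩
  obtain ⟨w, hbw⟩ := hG.preconnected.exists_adj_of_nontrivial b
  let F : Finset (Sym2 V) := (Finset.univ.erase a).image fun v => if v = b then s(b, w) else s(a, v)
  have hFa : ∀ t, G.Adj a t → s(a, t) ∈ F := by
    intro t ht
    have htb : t ≠ b := fun h => hnab (h ▸ ht)
    exact Finset.mem_image.2 ⟨t, by simp [ht.ne'], by simp [htb]⟩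
  have hFb : ∀ t, G.Adj b t → s(b, t) ∈ F := by
    intro t ht
    have hta : t ≠ a := fun h => hnab (h ▸ ht.symm)
    refine Finset.mem_image.2 ⟨b, by simp [hne.symm], ?_⟩
    rcases (mem_bridgeNeighbors.1 (hmem t hta ht.ne')).2.2 b ht.symm with h | h
    · exact absurd h hne.symm
    · simp [h.2 w hbw]
  have hsub : G.edgeFinset ⊆ F := by
    rintro ⟨u, v⟩ huv
    rw [mem_edgeFinset] at huv
    change G.Adj u v at huv
    change s(u, v) ∈ F
    by_cases hua : u = a
    · exact hua ▸ hFa v (hua ▸ huv)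
    by_cases hub : u = b
    · exact hub ▸ hFb v (hub ▸ huv)
    rw [Sym2.eq_swap]
    rcases (mem_bridgeNeighbors.1 (hmem u hua hub)).2.2 v huv with h | ⟨h, -⟩
    · exact h ▸ hFa u (h ▸ huv.symm)
    · exact h ▸ hFb u (h ▸ huv.symm)
  refine isTree_iff_connected_and_card.2 ⟨hG, le_antisymm ?_ hG.card_vert_le_card_edgeSet_add_one⟩
  have h₁ := (Finset.card_le_card hsub).trans Finset.card_image_le
  rw [Finset.card_erase_of_mem (Finset.mem_univ a), Finset.card_univ] at h₁
  have h₂ : 0 < Fintype.card V := Fintype.card_pos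
  rw [Nat.card_eq_fintype_card, Nat.card_eq_fintype_card, ← edgeFinset_card]
  lia

theorem maxDegree_eq_of_compl_leaf [DecidableRel G.Adj] (hGc : Gᶜ.Connected)
    (hab : ∀ z, Gᶜ.Adj a z ↔ z = b) : G.maxDegree = Fintype.card V - 2 := by
  classical
  have hne := ((hab b).2 rfl).ne
  have : Nontrivial V := ⟨a, b, hne⟩
  refine le_antisymm (maxDegree_le_of_forall_degree_le _ _ fun v => ?_) ?_
  · obtain ⟨t, ht⟩ := hGc.preconnected.exists_adj_of_nontrivial v
    rw [← Finset.card_univ, ← Finset.card_pair ht.ne,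
      ← Finset.card_sdiff_of_subset (Finset.subset_univ _), ← card_neighborFinset_eq_degree]
    refine Finset.card_le_card fun z hz => ?_
    rw [mem_neighborFinset] at hz
    have hzt : z ≠ t := fun h => ht.2 (h ▸ hz)
    simp [hz.ne', hzt]
  · refine le_trans ?_ (G.degree_le_maxDegree a)
    rw [← Finset.card_univ, ← Finset.card_pair hne,
      ← Finset.card_sdiff_of_subset (Finset.subset_univ _), ← card_neighborFinset_eq_degree]
    refine Finset.card_le_card fun z hz => ?_
    have hz' : z ≠ a ∧ z ≠ b := by simpa using hz
    rw [mem_neighborFinset]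
    by_contra h
    exact hz'.2 ((hab z).1 ((compl_adj ..).2 ⟨hz'.1.symm, h⟩))

theorem maxDegree_le_cfcNum [DecidableRel G.Adj] (hT : G.IsTree)
    (hab : ∀ z, Gᶜ.Adj a z ↔ z = b) : G.maxDegree ≤ cfcNum G := by
  obtain ⟨c, hc, hcf⟩ := exists_isCFCColoring_lt_cfcNum hT.connected hab
  refine maxDegree_le_of_forall_degree_le _ _ fun v => ?_
  rw [← card_neighborFinset_eq_degree, ← Finset.card_range (cfcNum G)]
  refine Finset.card_le_card_of_injOn (fun t => c s(v, t)) (fun t ht => ?_) ?_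
  · simpa using hc s(v, t) (by simpa using ht)
  · intro t ht t' ht' h
    have ht : G.Adj v t := by simpa using ht
    have ht' : G.Adj v t' := by simpa using ht'
    by_contra htt
    obtain ⟨p, e, he, hu⟩ := hcf t t' htt
    have hp : p = ⟨.cons ht.symm (.cons ht' .nil), by simp [ht.ne', ht'.ne, htt]⟩ :=
      (hT.isAcyclic.subsingleton_path _ _).elim _ _
    subst hp
    have h : c s(t, v) = c s(v, t') := by rw [Sym2.eq_swap]; exact h
    have hs : s(t, v) = s(v, t') := by
      rcases (by simpa using he : e = s(t, v) ∨ e = s(v, t')) with rfl | rfl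
      · exact (hu s(v, t') (by simp) h.symm).symm
      · exact hu s(t, v) (by simp) h
    rcases Sym2.eq_iff.1 hs with ⟨h₁, -⟩ | ⟨h₁, -⟩
    · exact ht.ne' h₁
    · exact htt h₁

theorem exists_two_leaves (hne : a ≠ b) (hS : 2 < (bridgeNeighbors G a b).card) :
    ∃ s t, s ≠ t ∧ s ≠ a ∧ t ≠ a ∧ (∀ z, G.Adj s z → z = a) ∧ ∀ z, G.Adj t z → z = a := by
  obtain ⟨s, hs, t, ht, u, hu, hst, hsu, htu⟩ := Finset.two_lt_card.1 hS
  have key : ∀ s ∈ bridgeNeighbors G a b, ¬ G.Adj b s → s ≠ a ∧ ∀ z, G.Adj s z → z = a := by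
    intro s hs hbs
    have hs := mem_bridgeNeighbors.1 hs
    refine ⟨hs.1, fun z hz => (hs.2.2 z hz).elim id fun h => ?_⟩
    exact absurd (h.1 ▸ hz).symm hbs
  have huniq : ∀ s ∈ bridgeNeighbors G a b, ∀ t ∈ bridgeNeighbors G a b, G.Adj b s → G.Adj b t →
      s = t := by
    intro s _ t ht hbs hbt
    exact ((mem_bridgeNeighbors.1 ht).2.2 b hbt.symm).elim (absurd · hne.symm) (·.2 s hbs)
  by_cases hbs : G.Adj b s
  · have hbt : ¬ G.Adj b t := fun h => hst (huniq s hs t ht hbs h)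
    have hbu : ¬ G.Adj b u := fun h => hsu (huniq s hs u hu hbs h)
    exact ⟨t, u, htu, (key t ht hbt).1, (key u hu hbu).1, (key t ht hbt).2, (key u hu hbu).2⟩
  by_cases hbt : G.Adj b t
  · have hbu : ¬ G.Adj b u := fun h => htu (huniq t ht u hu hbt h)
    exact ⟨s, u, hsu, (key s hs hbs).1, (key u hu hbu).1, (key s hs hbs).2, (key u hu hbu).2⟩
  exact ⟨s, t, hst, (key s hs hbs).1, (key t ht hbt).1, (key s hs hbs).2, (key t ht hbt).2⟩

theorem card_bridgeNeighbors_le_two_or (h4 : 4 ≤ Fintype.card V) (hab : a ≠ b)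
    {x y : V} (hxy : x ≠ y) :
    (bridgeNeighbors G a b).card ≤ 2 ∨ (bridgeNeighbors Gᶜ x y).card ≤ 2 := by
  classical
  by_contra! h
  obtain ⟨l₁, l₂, hl, -, -, hl₁, hl₂⟩ := exists_two_leaves hab h.1
  obtain ⟨s₁, s₂, hs, hsx₁, hsx₂, hs₁, hs₂⟩ := exists_two_leaves hxy h.2
  obtain ⟨l, hlx, hl⟩ : ∃ l, l ≠ x ∧ ∀ z, G.Adj l z → z = a := by
    by_cases h : l₁ = x
    · exact ⟨l₂, fun h' => hl (h.trans h'.symm), hl₂⟩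
    · exact ⟨l₁, h, hl₁⟩
  have hadj : ∀ s, (∀ z, Gᶜ.Adj s z → z = x) → ∀ z, z ≠ s → z ≠ x → G.Adj s z := by
    intro s hs z hzs hzx
    by_contra h
    exact hzx (hs z ((compl_adj ..).2 ⟨hzs.symm, h⟩))
  obtain ⟨z, hz⟩ : ∃ z, z ∉ ({s₁, s₂, x} : Finset V) := by
    by_contra! h
    have := (Finset.card_le_card fun z (_ : z ∈ Finset.univ) => h z).trans Finset.card_le_three
    rw [Finset.card_univ] at this
    lia
  simp only [Finset.mem_insert, Finset.mem_singleton, not_or] at hz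
  by_cases h₁ : l = s₁
  · subst h₁
    exact hz.2.1 ((hl z (hadj l hs₁ z hz.1 hz.2.2)).trans
      (hl s₂ (hadj l hs₁ s₂ hs.symm hsx₂)).symm)
  by_cases h₂ : l = s₂
  · subst h₂
    exact hz.1 ((hl z (hadj l hs₂ z hz.2.1 hz.2.2)).trans (hl s₁ (hadj l hs₂ s₁ hs hsx₁)).symm)
  exact hs ((hl s₁ (hadj s₁ hs₁ l h₁ hlx).symm).trans (hl s₂ (hadj s₂ hs₂ l h₂ hlx).symm).symm)

theorem isTree_of_card_eq_four (hG : G.Connected) (hGc : Gᶜ.Connected)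
    (h4 : Fintype.card V = 4) : G.IsTree := by
  classical
  refine isTree_iff_connected_and_card.2 ⟨hG, le_antisymm ?_ hG.card_vert_le_card_edgeSet_add_one⟩
  have h₁ := hGc.card_vert_le_card_edgeSet_add_one
  have h₂ : G.edgeFinset.card + Gᶜ.edgeFinset.card = 6 := by
    have hu : G.edgeFinset ∪ Gᶜ.edgeFinset = (⊤ : SimpleGraph V).edgeFinset := by
      rw [← Finset.coe_inj, Finset.coe_union, coe_edgeFinset, coe_edgeFinset, coe_edgeFinset,
        ← edgeSet_sup, sup_compl_eq_top]
    rw [← Finset.card_union_of_disjoint (disjoint_edgeFinset.2 disjoint_compl_right), hu,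
      card_edgeFinset_top_eq_card_choose_two, h4]
    rfl
  rw [Nat.card_eq_fintype_card, Nat.card_eq_fintype_card, ← edgeFinset_card] at h₁ ⊢
  lia

end Extremal

/-- Nordhaus–Gaddum bounds when both G and Ḡ are connected with a cut-edge (n ≥ 4);
equality in either upper bound holds iff one of G, Ḡ is a tree with maximum degree n − 2. -/
theorem nordhausGaddum_edgeConnectivity_one {V : Type*} [Fintype V] [DecidableEq V]
    (G : SimpleGraph V) [DecidableRel G.Adj]
    (n : ℕ) (hn : Fintype.card V = n) (h4 : 4 ≤ n)
    (hG : G.Connected) (hGc : Gᶜ.Connected)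
    (hb : ∃ e : Sym2 V, G.IsBridge e) (hbc : ∃ e : Sym2 V, Gᶜ.IsBridge e) :
    (4 ≤ cfcNum G + cfcNum Gᶜ ∧ cfcNum G + cfcNum Gᶜ ≤ n) ∧
    (4 ≤ cfcNum G * cfcNum Gᶜ ∧ cfcNum G * cfcNum Gᶜ ≤ 2 * (n - 2)) ∧
    ((cfcNum G + cfcNum Gᶜ = n ∨ cfcNum G * cfcNum Gᶜ = 2 * (n - 2)) ↔
      ((G.IsTree ∧ G.maxDegree = n - 2) ∨ (Gᶜ.IsTree ∧ Gᶜ.maxDegree = n - 2))) := by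
  subst hn
  obtain ⟨x, y, hxy⟩ := exists_leaf_of_isBridge hG hGc hb hbc
  obtain ⟨a, b, hab⟩ := exists_leaf_of_isBridge hGc (by rwa [compl_compl]) hbc
    (by rwa [compl_compl])
  have hxy' : ∀ z, Gᶜᶜ.Adj x z ↔ z = y := by rwa [compl_compl]
  have lower := two_le_cfcNum hG hab
  have lower' := two_le_cfcNum hGc hxy'
  have upper := cfcNum_le hG hab
  have upper' := cfcNum_le hGc hxy'
  have card := card_bridgeNeighbors_le (G := G) ((hab b).2 rfl).ne
  have card' := card_bridgeNeighbors_le (G := Gᶜ) ((hxy y).2 rfl).ne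
  have deg := maxDegree_eq_of_compl_leaf hGc hab
  have deg' := maxDegree_eq_of_compl_leaf (G := Gᶜ) (by rwa [compl_compl]) hxy'
  have tree := isTree_of_card_bridgeNeighbors hG hab
  have tree' := isTree_of_card_bridgeNeighbors hGc hxy'
  have treeLower : G.IsTree → _ := fun hT => maxDegree_le_cfcNum hT hab
  have treeLower' : Gᶜ.IsTree → _ := fun hT => maxDegree_le_cfcNum hT hxy'
  have small := card_bridgeNeighbors_le_two_or (G := G) h4 ((hab b).2 rfl).ne ((hxy y).2 rfl).ne
  have four := isTree_of_card_eq_four hG hGc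
  have hprod : cfcNum G * cfcNum Gᶜ = 2 * cfcNum Gᶜ ∧ cfcNum G = 2 ∨
      cfcNum G * cfcNum Gᶜ = 2 * cfcNum G ∧ cfcNum Gᶜ = 2 := by
    rcases small with h | h
    · have : cfcNum G = 2 := by lia
      exact .inl ⟨by rw [this], this⟩
    · have : cfcNum Gᶜ = 2 := by lia
      exact .inr ⟨by rw [this, mul_comm], this⟩
  refine ⟨by lia, by lia, fun h => ?_, ?_⟩
  · by_cases h' : Fintype.card V = 4
    · exact .inl ⟨four h', deg⟩
    · by_cases hS : (bridgeNeighbors G a b).card = Fintype.card V - 2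
      · exact .inl ⟨tree hS, deg⟩
      · exact .inr ⟨tree' (by lia), deg'⟩
  · rintro (⟨hT, hd⟩ | ⟨hT, hd⟩)
    · have := treeLower hT
      left
      lia
    · have := treeLower' hT
      left
      lia
end

section
/- Let G be a simple graph on n ≥ 4 vertices such that both G and its complement Ḡ are connected and both have edge-connectivity 1 (i.e., each has a cut-edge). Then cfc(G) + cfc(Ḡ) = 4 (equivalently, cfc(G) · cfc(Ḡ) = 4) if and only if each of G and Ḡ has the property that every vertex of maximum degree is incident with at most two cut-edges. -/
open SimpleGraph

/-- Every vertex of maximum degree of G is incident with at most two cut-edges. -/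
def MaxDegreeFewCutEdges {V : Type*} [Fintype V] (G : SimpleGraph V)
    [DecidableRel G.Adj] : Prop :=
  ∀ v : V, G.degree v = G.maxDegree → {e : Sym2 V | G.IsBridge e ∧ v ∈ e}.ncard ≤ 2

namespace SimpleGraph

variable {V : Type*}

/-- The vertices `a` and `b` are joined by a conflict-free path of `G` colored by `c`. -/
def HasConflictFreePath (G : SimpleGraph V) (c : Sym2 V → ℕ) (a b : V) : Prop :=
  ∃ p : G.Path a b, ∃ e ∈ (p.1).edges, ∀ e' ∈ (p.1).edges, c e' = c e → e' = e

namespace HasConflictFreePath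

variable {G : SimpleGraph V} {c : Sym2 V → ℕ} {a b d e f : V}

lemma symm (h : G.HasConflictFreePath c a b) : G.HasConflictFreePath c b a := by
  obtain ⟨p, e, he, h⟩ := h
  exact ⟨p.reverse, e, by simpa using he, by simpa using h⟩

lemma of_adj (h : G.Adj a b) : G.HasConflictFreePath c a b :=
  ⟨Path.singleton h, s(a, b), by simp [Path.singleton], by simp [Path.singleton]⟩

lemma of_two (h₁ : G.Adj a b) (h₂ : G.Adj b d) (had : a ≠ d)
    (hc : c s(a, b) ≠ c s(b, d)) : G.HasConflictFreePath c a d := by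
  refine ⟨⟨.cons h₁ (.cons h₂ .nil), ?_⟩, s(a, b), by simp, ?_⟩
  · have := h₁.ne; have := h₂.ne
    simp [Walk.cons_isPath_iff, *]
  · simp only [Walk.edges_cons, Walk.edges_nil]
    grind

lemma of_three (h₁ : G.Adj a b) (h₂ : G.Adj b d) (h₃ : G.Adj d e) (had : a ≠ d) (hbe : b ≠ e)
    (hae : a ≠ e) (hc : c s(a, b) ≠ c s(b, d) ∨ c s(b, d) ≠ c s(d, e)) :
    G.HasConflictFreePath c a e := by
  have hp : (Walk.cons h₁ (.cons h₂ (.cons h₃ .nil))).IsPath := by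
    have := h₁.ne; have := h₂.ne; have := h₃.ne
    simp [Walk.cons_isPath_iff, *]
  have : ∃ x ∈ [s(a, b), s(b, d), s(d, e)], ∀ y ∈ [s(a, b), s(b, d), s(d, e)],
      c y = c x → y = x := by
    simp only [List.mem_cons, List.not_mem_nil, or_false, exists_eq_or_imp, forall_eq_or_imp,
      forall_eq, exists_eq_left]
    grind
  exact ⟨⟨_, hp⟩, by simpa using this⟩

lemma of_four (h₁ : G.Adj a b) (h₂ : G.Adj b d) (h₃ : G.Adj d e) (h₄ : G.Adj e f)
    (had : a ≠ d) (hbe : b ≠ e) (hae : a ≠ e) (haf : a ≠ f) (hbf : b ≠ f) (hdf : d ≠ f)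
    (hc : c s(d, e) = c s(e, f)) (hc' : c s(a, b) ≠ c s(b, d)) :
    G.HasConflictFreePath c a f := by
  have hp : (Walk.cons h₁ (.cons h₂ (.cons h₃ (.cons h₄ .nil)))).IsPath := by
    have := h₁.ne; have := h₂.ne; have := h₃.ne; have := h₄.ne
    simp [Walk.cons_isPath_iff, *]
  have : ∃ x ∈ [s(a, b), s(b, d), s(d, e), s(e, f)],
      ∀ y ∈ [s(a, b), s(b, d), s(d, e), s(e, f)], c y = c x → y = x := by
    simp only [List.mem_cons, List.not_mem_nil, or_false, exists_eq_or_imp, forall_eq_or_imp,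
      forall_eq, exists_eq_left]
    grind
  exact ⟨⟨_, hp⟩, by simpa using this⟩

end HasConflictFreePath

variable {G : SimpleGraph V}

lemma isBridge_of_cut {S : Set V} {u v : V} (hu : u ∈ S) (hv : v ∉ S)
    (h : ∀ a ∈ S, ∀ b ∉ S, G.Adj a b → s(a, b) = s(u, v)) : G.IsBridge s(u, v) := by
  rw [isBridge_iff]
  rintro ⟨p⟩
  have key : ∀ {a b : V} (p : (G.deleteEdges {s(u, v)}).Walk a b), a ∈ S → b ∈ S := by
    intro a b p
    induction p with
    | nil => exact id
    | cons hadj _ ih =>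
      intro ha
      refine ih (by_contra fun hb => ?_)
      rw [deleteEdges_adj] at hadj
      exact hadj.2 (h _ ha _ hb hadj.1)
  exact hv (key p hu)

lemma IsBridge.exists_cut {u v : V} (h : G.IsBridge s(u, v)) :
    ∃ S : Set V, u ∈ S ∧ v ∉ S ∧ ∀ a ∈ S, ∀ b ∉ S, G.Adj a b → s(a, b) = s(u, v) := by
  rw [isBridge_iff] at h
  refine ⟨{x | (G.deleteEdges {s(u, v)}).Reachable u x}, .refl u, h, fun a ha b hb hab => ?_⟩
  by_contra hne
  exact hb (ha.trans (Adj.reachable (by simpa [deleteEdges_adj, hab] using hne)))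

lemma IsBridge.adj_of_connected {u v : V} (h : G.IsBridge s(u, v)) (hG : G.Connected) :
    G.Adj u v :=
  h.reachable_iff_adj.1 (hG.preconnected u v)

lemma Connected.exists_adj [Nontrivial V] (hG : G.Connected) (v : V) : ∃ w, G.Adj v w :=
  hG.preconnected.exists_adj_of_nontrivial v

lemma exists_leaf_of_small_cut (hG : G.Connected) {A : Finset V} {u v : V} (hu : u ∈ A)
    (h : ∀ a ∈ A, ∀ b ∉ A, G.Adj a b → s(a, b) = s(u, v)) (huv : G.Adj u v)
    (hA : A.card ≤ 2) : ∃ z w, G.Adj z w ∧ ∀ y, G.Adj z y → y = w := by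
  classical
  have : Nontrivial V := ⟨u, v, huv.ne⟩
  by_cases hex : ∃ u' ∈ A, u' ≠ u
  · obtain ⟨u', hu', hne⟩ := hex
    have hAeq : A = {u, u'} := by
      refine (Finset.eq_of_subset_of_card_le ?_ ?_).symm
      · simp [Finset.insert_subset_iff, hu, hu']
      · rw [Finset.card_pair hne.symm]; exact hA
    have hnb : ∀ y, G.Adj u' y → y = u := by
      intro y hy
      by_contra hyu
      have hyA : y ∉ A := by have := hy.ne; grind
      rcases Sym2.eq_iff.1 (h u' hu' y hyA hy) with h' | h'
      · exact hne h'.1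
      · exact hyu h'.2
    obtain ⟨y, hy⟩ := hG.exists_adj u'
    exact ⟨u', u, hnb y hy ▸ hy, hnb⟩
  · refine ⟨u, v, huv, fun y hy => ?_⟩
    have := hy.ne
    have := h u hu y (by grind) hy
    grind

/-- A connected graph with a bridge whose complement also has a bridge has a leaf. -/
lemma exists_leaf_of_isBridge_compl [Fintype V] (hG : G.Connected)
    (hb : ∃ e : Sym2 V, G.IsBridge e) (hbc : ∃ e : Sym2 V, Gᶜ.IsBridge e) :
    ∃ z w, G.Adj z w ∧ ∀ y, G.Adj z y → y = w := by
  classical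
  obtain ⟨⟨u, v⟩, hb⟩ := hb
  obtain ⟨⟨x, y⟩, hbc⟩ := hbc
  change G.IsBridge s(u, v) at hb
  change Gᶜ.IsBridge s(x, y) at hbc
  have huv := hb.adj_of_connected hG
  obtain ⟨S, huS, hvS, hS⟩ := hb.exists_cut
  obtain ⟨T, hxT, hyT, hT⟩ := hbc.exists_cut
  set A := Finset.univ.filter (· ∈ S) with hA
  set B := Finset.univ.filter (· ∉ S) with hB
  set C := Finset.univ.filter (· ∈ T) with hC
  by_cases hA2 : A.card ≤ 2
  · exact exists_leaf_of_small_cut hG (A := A) (by simpa [hA])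
      (by simpa [hA] using hS) huv hA2
  by_cases hB2 : B.card ≤ 2
  · refine exists_leaf_of_small_cut hG (A := B) (u := v) (v := u) (by simpa [hB])
      ?_ huv.symm hB2
    intro a ha b hb hab
    have := hS b (by simpa [hB] using hb) a (by simpa [hB] using ha) hab.symm
    rw [Sym2.eq_swap, this, Sym2.eq_swap]
  exfalso
  have hmem : ∀ p q, (p, q) ∈ (A ∩ C) ×ˢ (B \ C) ∪ (A \ C) ×ˢ (B ∩ C) →
      p ∈ S ∧ q ∉ S ∧ (p ∈ T ↔ q ∉ T) := by
    intro p q h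
    simp only [hA, hB, hC, Finset.mem_union, Finset.mem_product, Finset.mem_inter,
      Finset.mem_sdiff, Finset.mem_filter, Finset.mem_univ, true_and] at h
    tauto
  have hcard : ((A ∩ C) ×ˢ (B \ C) ∪ (A \ C) ×ˢ (B ∩ C)).card ≤ 2 := by
    refine le_trans (Finset.card_le_card_of_injOn (t := {s(u, v), s(x, y)})
      (fun p : V × V => s(p.1, p.2)) ?_ ?_) Finset.card_le_two
    · rintro ⟨p, q⟩ hpq
      obtain ⟨hpS, hqS, hpqT⟩ := hmem p q (by simpa using hpq)
      by_cases hadj : G.Adj p q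
      · simp [hS p hpS q hqS hadj]
      · have hadj' : Gᶜ.Adj p q := ⟨fun h => hqS (h ▸ hpS), hadj⟩
        have : s(p, q) = s(x, y) := by
          by_cases hpT : p ∈ T
          · exact hT p hpT q (by tauto) hadj'
          · rw [Sym2.eq_swap]
            exact hT q (by tauto) p hpT hadj'.symm
        simp [this]
    · rintro ⟨p, q⟩ hpq ⟨p', q'⟩ hpq' heq
      obtain ⟨hpS, -, -⟩ := hmem p q (by simpa using hpq)
      obtain ⟨-, hqS, -⟩ := hmem p' q' (by simpa using hpq')
      rcases Sym2.eq_iff.1 heq with h | h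
      · exact Prod.ext h.1 h.2
      · exact absurd ((show p = q' from h.1) ▸ hpS) hqS
  rw [Finset.card_union_of_disjoint (by
      rw [Finset.disjoint_left]
      rintro ⟨p, q⟩ h h'
      grind), Finset.card_product, Finset.card_product] at hcard
  have h1 := Finset.card_inter_add_card_sdiff A C
  have h2 := Finset.card_inter_add_card_sdiff B C
  have hx : 0 < (A ∩ C).card + (B ∩ C).card := by
    by_cases hxS : x ∈ S
    · have : 0 < (A ∩ C).card := Finset.card_pos.2 ⟨x, by grind⟩
      omega
    · have : 0 < (B ∩ C).card := Finset.card_pos.2 ⟨x, by grind⟩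
      omega
  have hy : 0 < (A \ C).card + (B \ C).card := by
    by_cases hxS : y ∈ S
    · have : 0 < (A \ C).card := Finset.card_pos.2 ⟨y, by grind⟩
      omega
    · have : 0 < (B \ C).card := Finset.card_pos.2 ⟨y, by grind⟩
      omega
  generalize (A ∩ C).card = a at *
  generalize (A \ C).card = a' at *
  generalize (B ∩ C).card = b at *
  generalize (B \ C).card = b' at *
  have h3 : 3 ≤ a + a' := by omega
  have h4 : 3 ≤ b + b' := by omega
  clear * - h3 h4 hx hy hcard
  rcases Nat.eq_zero_or_pos a with rfl | ha
  · nlinarith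
  rcases Nat.eq_zero_or_pos a' with rfl | ha'
  · nlinarith
  rcases Nat.eq_zero_or_pos b with rfl | hb
  · nlinarith
  rcases Nat.eq_zero_or_pos b' with rfl | hb'
  · nlinarith
  nlinarith

/-- The only path between the far ends of two bridges at `v` is the one through `v`. -/
lemma IsBridge.path_edges_eq {v a b : V} (ha : G.IsBridge s(v, a)) (hb : G.IsBridge s(v, b))
    (hva : G.Adj v a) (hvb : G.Adj v b) (hab : a ≠ b) (p : G.Walk a b) (hp : p.IsPath) :
    p.edges = [s(a, v), s(v, b)] := by
  cases p with
  | nil => exact absurd rfl hab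
  | @cons _ x _ h q =>
    have hpq := (Walk.cons_isPath_iff _ _).1 hp
    have hx : x = v := by
      by_contra hx
      have := isBridge_iff_forall_walk_mem_edges.1 ha (Walk.cons h (q.concat hvb.symm)).reverse
      simp only [Walk.edges_reverse, List.mem_reverse, Walk.edges_cons, List.mem_cons,
        Walk.edges_concat, List.concat_eq_append, List.mem_append] at this
      rcases this with h' | h' | h'
      · have := h.ne
        grind
      · exact hpq.2 (q.snd_mem_support_of_mem_edges h')
      · have := hva.ne
        simp at h'
        grind
    subst hx
    cases q with
    | nil => exact absurd rfl hvb.ne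
    | @cons _ y _ h' r =>
      have hr := (Walk.cons_isPath_iff _ _).1 hpq.1
      have hy : y = b := by
        by_contra hy
        have := isBridge_iff_forall_walk_mem_edges.1 hb (Walk.cons h' r)
        simp only [Walk.edges_cons, List.mem_cons] at this
        rcases this with h' | h'
        · have := hvb.ne
          grind
        · exact hr.2 (r.fst_mem_support_of_mem_edges h')
      subst hy
      have : r = .nil := (Walk.isPath_iff_nil.1 hr.1).eq_nil
      subst this
      simp

lemma color_ne_of_isBridge {c : Sym2 V → ℕ} (hc : IsCFCColoring G c) {v a b : V}
    (ha : G.IsBridge s(v, a)) (hb : G.IsBridge s(v, b)) (hva : G.Adj v a) (hvb : G.Adj v b)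
    (hab : a ≠ b) : c s(v, a) ≠ c s(v, b) := by
  intro heq
  obtain ⟨p, e, he, h⟩ := hc a b hab
  rw [ha.path_edges_eq hb hva hvb hab p.1 p.2] at he h
  have h₁ := h s(a, v) (by simp)
  have h₂ := h s(v, b) (by simp)
  rw [Sym2.eq_swap] at heq
  have := hva.ne
  simp only [List.mem_cons, List.not_mem_nil, or_false] at he
  grind

lemma exists_coloring_cfcNum [Finite V] (G : SimpleGraph V) (hG : G.Connected) :
    ∃ c : Sym2 V → ℕ, (∀ e ∈ G.edgeSet, c e < cfcNum G) ∧ IsCFCColoring G c := by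
  classical
  have := Fintype.ofFinite V
  refine Nat.sInf_mem (s := {k | ∃ c : Sym2 V → ℕ, (∀ e ∈ G.edgeSet, c e < k) ∧
    IsCFCColoring G c}) ⟨Fintype.card (Sym2 V), fun e => Fintype.equivFin _ e,
      fun e _ => (Fintype.equivFin _ e).2, fun u v huv => ?_⟩
  obtain ⟨p⟩ := hG.preconnected u v
  refine ⟨p.toPath, ?_⟩
  obtain ⟨e, he⟩ : ∃ e, e ∈ (p.toPath : G.Walk u v).edges := by
    cases (p.toPath : G.Walk u v) with
    | nil => exact absurd rfl huv
    | @cons _ w _ h q => exact ⟨s(u, w), by simp⟩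
  exact ⟨e, he, fun e' _ h => (Fintype.equivFin _).injective (Fin.ext h)⟩

lemma two_le_cfcNum [Finite V] (hG : G.Connected) {a b : V} (hab : Gᶜ.Adj a b) :
    2 ≤ cfcNum G := by
  obtain ⟨c, hc, hcf⟩ := exists_coloring_cfcNum G hG
  by_contra! hlt
  have h0 : ∀ e ∈ G.edgeSet, c e = 0 := fun e he => by have := hc e he; omega
  obtain ⟨p, e, he, h⟩ := hcf a b hab.ne
  have hall : ∀ e' ∈ p.1.edges, e' = e := fun e' he' => h e' he' (by
    rw [h0 _ (p.1.edges_subset_edgeSet he'), h0 _ (p.1.edges_subset_edgeSet he)])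
  have hnd := p.2.isTrail.edges_nodup
  obtain ⟨p, hp⟩ := p
  cases p with
  | nil => simp at he
  | @cons _ x _ h₁ q =>
    cases q with
    | nil => exact hab.2 h₁
    | @cons _ y _ h₂ r =>
      have e₁ := hall s(a, x) (by simp)
      have e₂ := hall s(x, y) (by simp)
      simp only [Walk.edges_cons, List.nodup_cons] at hnd
      simp_all

/-- Bridges at a common vertex need distinct colors, so three of them force three colors. -/
lemma three_le_cfcNum [Finite V] (hG : G.Connected) {v : V}
    (hv : 2 < {e : Sym2 V | G.IsBridge e ∧ v ∈ e}.ncard) : 3 ≤ cfcNum G := by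
  obtain ⟨c, hc, hcf⟩ := exists_coloring_cfcNum G hG
  refine hv.trans_le ?_
  have hmaps : ∀ e ∈ {e : Sym2 V | G.IsBridge e ∧ v ∈ e}, c e ∈ Set.Iio (cfcNum G) := by
    rintro e ⟨he, a, rfl⟩
    exact hc _ (he.adj_of_connected hG)
  have := Set.ncard_le_ncard_of_injOn c hmaps ?_ (Set.finite_Iio _)
  · simpa using this
  · rintro e ⟨he, a, rfl⟩ e' ⟨he', b, rfl⟩ heq
    by_contra hne
    exact color_ne_of_isBridge hcf he he' (he.adj_of_connected hG) (he'.adj_of_connected hG)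
      (fun h => hne (by rw [h])) heq

/-- If `G` has a vertex adjacent to all others but one and incident with few bridges, two colors
suffice. -/
lemma cfcNum_le_two_of_hub [Finite V] (hG : G.Connected) {z w : V} (hzw : z ≠ w)
    (hadj : ∀ y, y ≠ z → y ≠ w → G.Adj z y) (hnadj : ¬ G.Adj z w)
    (hz : {e : Sym2 V | G.IsBridge e ∧ z ∈ e}.ncard ≤ 2) : cfcNum G ≤ 2 := by
  classical
  have hthree : ∀ p q r, G.IsBridge s(z, p) → G.IsBridge s(z, q) → G.IsBridge s(z, r) →
      p ≠ q → q ≠ r → p ≠ r → False := by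
    intro p q r hp hq hr hpq hqr hpr
    have hsub : (({s(z, p), s(z, q), s(z, r)} : Finset (Sym2 V)) : Set (Sym2 V)) ⊆
        {e : Sym2 V | G.IsBridge e ∧ z ∈ e} := by
      intro e he
      simp only [Finset.coe_insert, Finset.coe_singleton, Set.mem_insert_iff,
        Set.mem_singleton_iff] at he
      rcases he with rfl | rfl | rfl <;> simp [*]
    have := (Set.ncard_le_ncard hsub (Set.toFinite _)).trans hz
    rw [Set.ncard_coe_finset, Finset.card_eq_three.2 ⟨s(z, p), s(z, q), s(z, r), by grind,
      by grind, by grind, rfl⟩] at this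
    omega
  have hpend : ∀ p, p ≠ z → (∀ y, G.Adj p y → y = z) → G.IsBridge s(z, p) := by
    intro p hp h
    rw [Sym2.eq_swap]
    refine isBridge_of_cut (S := {p}) rfl (by simpa using hp.symm) ?_
    rintro a rfl b hb hab
    rw [h b hab]
  have : Nontrivial V := ⟨z, w, hzw⟩
  suffices ∃ c : Sym2 V → ℕ, (∀ e, c e < 2) ∧ IsCFCColoring G c by
    obtain ⟨c, hc, hcf⟩ := this
    exact Nat.sInf_le ⟨c, fun e _ => hc e, hcf⟩
  obtain ⟨x, hwx⟩ := hG.exists_adj w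
  have hxz : x ≠ z := by rintro rfl; exact hnadj hwx.symm
  have hxw : x ≠ w := hwx.ne'
  have hzx := hadj x hxz hxw
  by_cases hdeg : ∃ u, G.Adj w u ∧ u ≠ x
  · obtain ⟨u, hwu, hux⟩ := hdeg
    have huz : u ≠ z := by rintro rfl; exact hnadj hwu.symm
    have huw : u ≠ w := hwu.ne'
    have hzu := hadj u huz huw
    obtain ⟨s, hs, hsP⟩ : ∃ s, (s = z ∨ ∀ y, G.Adj s y → y = z) ∧ ∀ p q, p ≠ z → q ≠ z → p ≠ q →
        (∀ y, G.Adj p y → y = z) → (∀ y, G.Adj q y → y = z) → p = s ∨ q = s := by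
      by_cases h : ∃ s, s ≠ z ∧ ∀ y, G.Adj s y → y = z
      · obtain ⟨s, hsz, hs⟩ := h
        refine ⟨s, .inr hs, fun p q hp hq hpq hp' hq' => ?_⟩
        by_contra! hne
        exact hthree p q s (hpend p hp hp') (hpend q hq hq') (hpend s hsz hs) hpq hne.2 hne.1
      · exact ⟨z, .inl rfl, fun p q hp _ _ hp' _ => (h.elim ⟨p, hp, hp'⟩)⟩
    let c : Sym2 V → ℕ := fun e => if (z ∈ e ∧ e ≠ s(z, s)) ∨ e = s(w, u) then 0 else 1
    have hsw : s ≠ w := by grind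
    have hsx : s ≠ x := by have := hwx.symm; grind
    have hsu : s ≠ u := by have := hwu.symm; grind
    have c₁ : ∀ y, y ≠ s → c s(z, y) = 0 := by intro y hy; simp [c]; grind
    have c₁' : ∀ y, y ≠ s → c s(y, z) = 0 := by intro y hy; rw [Sym2.eq_swap]; exact c₁ y hy
    have c₂ : c s(z, s) = 1 := by simp [c]; grind
    have c₂' : c s(s, z) = 1 := by rw [Sym2.eq_swap]; exact c₂
    have c₃ : ∀ a b, a ≠ z → b ≠ z → a ≠ w → b ≠ w → c s(a, b) = 1 := by
      intro a b _ _ _ _; simp [c]; grind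
    have c₄ : ∀ y, y ≠ z → y ≠ u → c s(w, y) = 1 := by intro y _ _; simp [c]; grind
    have c₄' : ∀ y, y ≠ z → y ≠ u → c s(y, w) = 1 := by
      intro y h h'; rw [Sym2.eq_swap]; exact c₄ y h h'
    have c₅ : c s(w, u) = 0 := by simp [c]
    have c₅' : c s(u, w) = 0 := by rw [Sym2.eq_swap]; exact c₅
    refine ⟨c, fun e => by simp only [c]; split_ifs <;> omega, ?_⟩
    have hwz : ∀ y, y ≠ w → G.HasConflictFreePath c w y := by
      intro y hyw
      by_cases hyz : y = z
      · subst hyz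
        exact .of_two hwx hzx.symm hzw.symm (by rw [c₄ x hxz hux.symm, c₁' x hsx.symm]; simp)
      by_cases hwy : G.Adj w y
      · exact .of_adj hwy
      · have hyx : y ≠ x := by rintro rfl; exact hwy hwx
        exact .of_three hwx hzx.symm (hadj y hyz hyw) hzw.symm hyx.symm hyw.symm
          (.inl (by rw [c₄ x hxz hux.symm, c₁' x hsx.symm]; simp))
    have hgood : ∀ a b, a ≠ b → a ≠ z → b ≠ z → a ≠ w → b ≠ w →
        (∃ a', G.Adj a a' ∧ a' ≠ z ∧ a' ≠ w) → G.HasConflictFreePath c a b := by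
      rintro a b hab haz hbz haw hbw ⟨a', haa', ha'z, ha'w⟩
      by_cases hadjab : G.Adj a b
      · exact .of_adj hadjab
      · have ha'b : a' ≠ b := by rintro rfl; exact hadjab haa'
        have ha's : a' ≠ s := by have := haa'.symm; grind
        exact .of_three haa' (hadj a' ha'z ha'w).symm (hadj b hbz hbw) haz ha'b hab
          (.inl (by rw [c₃ a a' haz ha'z haw ha'w, c₁' a' ha's]; simp))
    have hlone : ∀ a b, a ≠ b → a ≠ z → b ≠ z → a ≠ w → b ≠ w → G.Adj w a →
        G.HasConflictFreePath c a b := by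
      intro a b hab haz hbz haw hbw hwa
      have has : a ≠ s := by have := hwa.symm; grind
      by_cases hbs : b = s
      · subst hbs
        exact .of_two (hadj a haz haw).symm (hadj b hbz hbw) hab (by rw [c₁' a has, c₂]; simp)
      by_cases hau : a = u
      · subst hau
        by_cases hbx : b = x
        · subst hbx
          exact .of_two hwa.symm hwx hab (by rw [c₅', c₄ b hxz hux.symm]; simp)
        · exact .of_four hwa.symm hwx hzx.symm (hadj b hbz hbw) hux hzw.symm haz hab hbw.symm
            (Ne.symm hbx) (by rw [c₁' x hsx.symm, c₁ b hbs])
            (by rw [c₅', c₄ x hxz hux.symm]; simp)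
      · by_cases hbu : b = u
        · subst hbu
          exact .of_two hwa.symm hwu hab (by rw [c₅, c₄' a haz hau]; simp)
        · exact .of_four hwa.symm hwu hzu.symm (hadj b hbz hbw) hau hzw.symm haz hab hbw.symm
            (Ne.symm hbu) (by rw [c₁' u hsu.symm, c₁ b hbs])
            (by rw [c₅, c₄' a haz hau]; simp)
    intro a b hab
    change G.HasConflictFreePath c a b
    by_cases haw : a = w
    · subst haw; exact hwz b hab.symm
    by_cases hbw : b = w
    · subst hbw; exact (hwz a hab).symm
    by_cases haz : a = z
    · subst haz; exact .of_adj (hadj b hab.symm hbw)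
    by_cases hbz : b = z
    · subst hbz; exact .of_adj (hadj a hab haw).symm
    by_cases hga : ∃ a', G.Adj a a' ∧ a' ≠ z ∧ a' ≠ w
    · exact hgood a b hab haz hbz haw hbw hga
    by_cases hgb : ∃ b', G.Adj b b' ∧ b' ≠ z ∧ b' ≠ w
    · exact (hgood b a hab.symm hbz haz hbw haw hgb).symm
    by_cases hwa : G.Adj w a
    · exact hlone a b hab haz hbz haw hbw hwa
    by_cases hwb : G.Adj w b
    · exact (hlone b a hab.symm hbz haz hbw haw hwb).symm
    have hcol : c s(a, z) ≠ c s(z, b) := by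
      have hwa' : ¬ G.Adj a w := fun h => hwa h.symm
      have hwb' : ¬ G.Adj b w := fun h => hwb h.symm
      rcases hsP a b haz hbz hab (by grind) (by grind) with rfl | rfl
      · rw [c₂', c₁ b hab.symm]; simp
      · rw [c₂, c₁' a hab]; simp
    exact .of_two (hadj a haz haw).symm (hadj b hbz hbw) hab hcol
  · push Not at hdeg
    have hlonely : ∀ p, p ≠ z → p ≠ w → (∀ y, G.Adj p y → y = z ∨ y = w) →
        G.IsBridge s(z, p) := by
      intro p hpz hpw hp
      by_cases hpx : p = x
      · subst hpx
        rw [Sym2.eq_swap]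
        refine isBridge_of_cut (S := {p, w}) (by simp) (by simp [hpz.symm, hzw]) ?_
        rintro a (rfl | rfl) b hb hab
        · grind
        · have := hdeg b hab
          simp_all
      · exact hpend p hpz fun y hy => (hp y hy).resolve_right fun h =>
          hpx (hdeg p (h ▸ hy).symm)
    obtain ⟨s, hsx, hs, hsP⟩ : ∃ s, s ≠ x ∧ (s = z ∨ s ≠ w ∧ ∀ y, G.Adj s y → y = z) ∧
        ∀ p q, p ≠ z → q ≠ z → p ≠ w → q ≠ w → p ≠ q →
        (∀ y, G.Adj p y → y = z ∨ y = w) → (∀ y, G.Adj q y → y = z ∨ y = w) →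
        p = s ∨ q = s := by
      by_cases h : ∃ s, s ≠ z ∧ s ≠ w ∧ s ≠ x ∧ ∀ y, G.Adj s y → y = z ∨ y = w
      · obtain ⟨s, hsz, hsw, hsx, hs⟩ := h
        refine ⟨s, hsx, .inr ⟨hsw, fun y hy => (hs y hy).resolve_right fun h =>
          hsx (hdeg s (h ▸ hy).symm)⟩, fun p q hp hq hpw hqw hpq hp' hq' => ?_⟩
        by_contra! hne
        exact hthree p q s (hlonely p hp hpw hp') (hlonely q hq hqw hq') (hlonely s hsz hsw hs)
          hpq hne.2 hne.1
      · refine ⟨z, hxz.symm, .inl rfl, fun p q hp hq hpw hqw hpq hp' hq' => ?_⟩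
        have : p = x := by by_contra hne; exact h ⟨p, hp, hpw, hne, hp'⟩
        have : q = x := by by_contra hne; exact h ⟨q, hq, hqw, hne, hq'⟩
        grind
    let c : Sym2 V → ℕ := fun e => if z ∈ e ∧ e ≠ s(z, s) then 0 else 1
    have c₁ : ∀ y, y ≠ s → c s(z, y) = 0 := by intro y hy; simp [c]; grind
    have c₁' : ∀ y, y ≠ s → c s(y, z) = 0 := by intro y hy; rw [Sym2.eq_swap]; exact c₁ y hy
    have c₂ : c s(z, s) = 1 := by simp [c]
    have c₂' : c s(s, z) = 1 := by rw [Sym2.eq_swap]; exact c₂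
    have c₃ : ∀ a b, a ≠ z → b ≠ z → c s(a, b) = 1 := by
      intro a b _ _; simp [c]; grind
    refine ⟨c, fun e => by simp only [c]; split_ifs <;> omega, ?_⟩
    have hgood : ∀ a b, a ≠ b → a ≠ z → b ≠ z → b ≠ w →
        (∃ a', G.Adj a a' ∧ a' ≠ z ∧ a' ≠ w) → G.HasConflictFreePath c a b := by
      rintro a b hab haz hbz hbw ⟨a', haa', ha'z, ha'w⟩
      by_cases hadjab : G.Adj a b
      · exact .of_adj hadjab
      · have ha'b : a' ≠ b := by rintro rfl; exact hadjab haa'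
        have ha's : a' ≠ s := by
          have := haa'.symm
          grind
        exact .of_three haa' (hadj a' ha'z ha'w).symm (hadj b hbz hbw) haz ha'b hab
          (.inl (by rw [c₃ a a' haz ha'z, c₁' a' ha's]; simp))
    have hwz : ∀ y, y ≠ w → G.HasConflictFreePath c w y := by
      intro y hyw
      by_cases hyz : y = z
      · subst hyz
        exact .of_two hwx hzx.symm hzw.symm (by rw [c₃ w x hyw.symm hxz, c₁' x hsx.symm]; simp)
      exact hgood w y hyw.symm hzw.symm hyz hyw ⟨x, hwx, hxz, hxw⟩
    intro a b hab
    change G.HasConflictFreePath c a b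
    by_cases haw : a = w
    · subst haw; exact hwz b hab.symm
    by_cases hbw : b = w
    · subst hbw; exact (hwz a hab).symm
    by_cases haz : a = z
    · subst haz; exact .of_adj (hadj b hab.symm hbw)
    by_cases hbz : b = z
    · subst hbz; exact .of_adj (hadj a hab haw).symm
    by_cases hga : ∃ a', G.Adj a a' ∧ a' ≠ z ∧ a' ≠ w
    · exact hgood a b hab haz hbz hbw hga
    by_cases hgb : ∃ b', G.Adj b b' ∧ b' ≠ z ∧ b' ≠ w
    · exact (hgood b a hab.symm hbz haz haw hgb).symm
    have hcol : c s(a, z) ≠ c s(z, b) := by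
      rcases hsP a b haz hbz haw hbw hab (by grind) (by grind) with rfl | rfl
      · rw [c₂', c₁ b hab.symm]; simp
      · rw [c₂, c₁' a hab]; simp
    exact .of_two (hadj a haz haw).symm (hadj b hbz hbw) hab hcol

lemma cfcNum_le_two [Fintype V] [DecidableRel G.Adj] (hG : G.Connected) (hGc : Gᶜ.Connected)
    (hb : ∃ e : Sym2 V, G.IsBridge e) (hbc : ∃ e : Sym2 V, Gᶜ.IsBridge e)
    (h : MaxDegreeFewCutEdges G) : cfcNum G ≤ 2 := by
  classical
  obtain ⟨z, w, hzw, hz⟩ := exists_leaf_of_isBridge_compl hGc hbc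
    (by rwa [compl_compl])
  have : Nontrivial V := ⟨z, w, hzw.ne⟩
  have hadj : ∀ y, y ≠ z → y ≠ w → G.Adj z y := fun y hyz hyw => by
    by_contra hn
    exact hyw (hz y ⟨hyz.symm, hn⟩)
  refine cfcNum_le_two_of_hub hG hzw.ne hadj hzw.2 (h z (le_antisymm (G.degree_le_maxDegree z) ?_))
  refine G.maxDegree_le_of_forall_degree_le _ fun v => ?_
  obtain ⟨v', hv'⟩ := hGc.exists_adj v
  have h₁ : G.neighborFinset v ⊆ (Finset.univ.erase v).erase v' := by
    intro y hy
    rw [mem_neighborFinset] at hy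
    have := hy.ne'
    have : y ≠ v' := by rintro rfl; exact hv'.2 hy
    grind
  have h₂ : (Finset.univ.erase z).erase w ⊆ G.neighborFinset z := by
    intro y hy
    rw [mem_neighborFinset]
    exact hadj y (by grind) (by grind)
  have h₁ := Finset.card_le_card h₁
  have h₂ := Finset.card_le_card h₂
  rw [Finset.card_erase_of_mem (by have := hv'.ne'; grind), Finset.card_erase_of_mem (by simp),
    card_neighborFinset_eq_degree] at h₁
  rw [Finset.card_erase_of_mem (by have := hzw.ne'; grind), Finset.card_erase_of_mem (by simp),
    card_neighborFinset_eq_degree] at h₂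
  omega

end SimpleGraph

/-- When both G and Ḡ are connected with a cut-edge (n ≥ 4): cfc(G) + cfc(Ḡ) = 4
(equivalently cfc(G) · cfc(Ḡ) = 4) iff in each of G and Ḡ every vertex of maximum
degree is incident with at most two cut-edges. -/
theorem nordhausGaddum_lower_equality {V : Type*} [Fintype V] [DecidableEq V]
    (G : SimpleGraph V) [DecidableRel G.Adj]
    (n : ℕ) (hn : Fintype.card V = n) (h4 : 4 ≤ n)
    (hG : G.Connected) (hGc : Gᶜ.Connected)
    (hb : ∃ e : Sym2 V, G.IsBridge e) (hbc : ∃ e : Sym2 V, Gᶜ.IsBridge e) :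
    (cfcNum G + cfcNum Gᶜ = 4 ↔ (MaxDegreeFewCutEdges G ∧ MaxDegreeFewCutEdges Gᶜ)) ∧
    (cfcNum G * cfcNum Gᶜ = 4 ↔ (MaxDegreeFewCutEdges G ∧ MaxDegreeFewCutEdges Gᶜ)) := by
  have hG2 : 2 ≤ cfcNum G := by
    obtain ⟨⟨u, v⟩, h⟩ := hbc
    exact two_le_cfcNum hG (IsBridge.adj_of_connected h hGc)
  have hGc2 : 2 ≤ cfcNum Gᶜ := by
    obtain ⟨⟨u, v⟩, h⟩ := hb
    exact two_le_cfcNum hGc (by rw [compl_compl]; exact IsBridge.adj_of_connected h hG)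
  have hiff : (MaxDegreeFewCutEdges G ∧ MaxDegreeFewCutEdges Gᶜ) ↔
      cfcNum G = 2 ∧ cfcNum Gᶜ = 2 := by
    constructor
    · rintro ⟨h, h'⟩
      exact ⟨le_antisymm (cfcNum_le_two hG hGc hb hbc h) hG2,
        le_antisymm (cfcNum_le_two hGc (by rwa [compl_compl]) hbc (by rwa [compl_compl]) h') hGc2⟩
    · rintro ⟨h, h'⟩
      refine ⟨fun v _ => ?_, fun v _ => ?_⟩
      · by_contra! hv
        have := three_le_cfcNum hG hv
        omega
      · by_contra! hv
        have := three_le_cfcNum hGc hv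
        omega
  rw [hiff]
  refine ⟨by omega, fun h => ?_, fun h => by rw [h.1, h.2]⟩
  constructor <;> nlinarith
end
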